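/- arXiv:2201.12699 — 4 statements merged into one kernel-verified Lean document; each statement's English description precedes it below -/
import Mathlib

section
/- Let κ ∈ (0,1), let f : ℝ → ℝ be defined by f(T) = ∫₀^T F(1/4, 3/4; 1/2; κ² sin² t) dt, let φ : ℝ → ℝ be the inverse function of f, let ψ = arcsin(κ sin φ), and let d = cos ψ. Then for every u ∈ ℝ, the derivative of d at u equals −2 sin(ψ(u)/2) · κ cos φ(u). -/
/-!
The proof rests on the closed form `F(1/4, 3/4; 1/2; sin² y) = cos (y / 2) / cos y` for
`|y| < π / 2`. Since `(1/4)ₙ (3/4)ₙ / ((1/2)ₙ n!) = (1/2)₂ₙ / (2n)!`, the series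
`F(1/4, 3/4; 1/2; z²)` is the even part of the binomial series of `(1 - z)^(-1/2)`
(`gaussHyp_sq`), and for `z = sin y` one has `1 ∓ z = (cos (y / 2) ∓ sin (y / 2))²`
(`gaussHyp_sin_sq`).

Hence the integrand defining `f` is continuous and positive, so `f` is strictly increasing, its
inverse `φ` is continuous, and `φ' = cos ψ / cos (ψ / 2)` by the inverse function theorem. The
chain rule applied to `d = cos (arcsin (κ sin φ))`, together with `sin ψ = 2 sin (ψ/2) cos (ψ/2)`,
gives the derivative.
-/

open Real

/-- The Gauss hypergeometric series `F(a, b; c; x)`. -/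
noncomputable def gaussHyp (a b c x : ℝ) : ℝ :=
  ∑' n : ℕ, ((ascPochhammer ℝ n).eval a * (ascPochhammer ℝ n).eval b /
    ((ascPochhammer ℝ n).eval c * (n.factorial : ℝ))) * x ^ n

/-- The coefficients of `F(1/4, 3/4; 1/2; ·)` are the even-indexed coefficients of the binomial
series of `(1 - z)^(-1/2)`. -/
lemma gaussHyp_coeff_eq (n : ℕ) :
    (ascPochhammer ℝ n).eval (1/4) * (ascPochhammer ℝ n).eval (3/4) /
      ((ascPochhammer ℝ n).eval (1/2) * (n.factorial : ℝ)) =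
    (ascPochhammer ℝ (2 * n)).eval (1/2) / ((2 * n).factorial : ℝ) := by
  induction n with
  | zero => simp
  | succ n ih =>
    have h1 : (ascPochhammer ℝ n).eval (1/2 : ℝ) ≠ 0 :=
      (ascPochhammer_pos n (1/2 : ℝ) (by norm_num)).ne'
    have h2 : (n.factorial : ℝ) ≠ 0 := by positivity
    have h3 : ((2 * n).factorial : ℝ) ≠ 0 := by positivity
    have h4 : (1/2 + (n : ℝ)) ≠ 0 := by positivity
    rw [div_eq_div_iff (by positivity) h3] at ih
    rw [show 2 * (n + 1) = 2 * n + 1 + 1 by ring]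
    simp only [ascPochhammer_succ_eval, Nat.factorial_succ]
    push_cast
    rw [div_eq_div_iff (by positivity) (by positivity)]
    linear_combination ((1/4 + (n:ℝ)) * (3/4 + n) * (2 * n + 1 + 1) * (2 * n + 1)) * ih

lemma hasSum_one_div_sqrt_one_sub {z : ℝ} (hz : |z| < 1) :
    HasSum (fun n : ℕ => (ascPochhammer ℝ n).eval (1/2) / (n.factorial : ℝ) * z ^ n)
      (1 / √(1 - z)) := by
  have h := (Real.one_div_one_sub_rpow_hasFPowerSeriesOnBall_zero (1/2)).hasSum
    (y := z) (by simpa [enorm_eq_nnnorm, ← NNReal.coe_lt_coe] using hz)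
  rw [zero_add, ← Real.sqrt_eq_rpow] at h
  refine (congrArg (HasSum · _) (funext fun n => ?_)).mp h
  have hc := Ring.factorial_nsmul_multichoose_eq_ascPochhammer (1/2 : ℝ) n
  rw [Polynomial.ascPochhammer_smeval_cast, Polynomial.ascPochhammer_smeval_eq_eval,
    Ring.multichoose_eq, nsmul_eq_mul] at hc
  have h2 : (n.factorial : ℝ) ≠ 0 := by positivity
  rw [← hc, FormalMultilinearSeries.ofScalars_apply_eq, smul_eq_mul]
  field_simp

lemma gaussHyp_sq {z : ℝ} (hz : |z| < 1) :
    gaussHyp (1/4) (3/4) (1/2) (z ^ 2) = (1 / √(1 - z) + 1 / √(1 + z)) / 2 := by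
  have h1 := hasSum_one_div_sqrt_one_sub hz
  have h2 := hasSum_one_div_sqrt_one_sub (z := -z) (by rwa [abs_neg])
  rw [sub_neg_eq_add] at h2
  have h3 := (h1.add h2).div_const 2
  have hinj : Function.Injective (fun n : ℕ => 2 * n) := fun a b h => by
    simpa using h
  rw [← hinj.hasSum_iff] at h3
  · rw [gaussHyp, ← h3.tsum_eq]
    refine tsum_congr fun n => ?_
    rw [gaussHyp_coeff_eq]
    simp only [Function.comp_apply, (even_two_mul n).neg_pow, pow_mul]
    ring
  · intro m hm
    have : Odd m := by
      rw [← Nat.not_even_iff_odd]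
      rintro ⟨k, hk⟩
      exact hm ⟨k, by simp only; omega⟩
    rw [this.neg_pow]
    ring

lemma gaussHyp_sin_sq {y : ℝ} (hy : y ∈ Set.Ioo (-(π / 2)) (π / 2)) :
    gaussHyp (1/4) (3/4) (1/2) (Real.sin y ^ 2) = Real.cos (y / 2) / Real.cos y := by
  have hy1 := hy.1
  have hy2 := hy.2
  have hc : 0 < Real.cos y := Real.cos_pos_of_mem_Ioo hy
  have hc2 : 0 < Real.cos (y / 2) :=
    Real.cos_pos_of_mem_Ioo ⟨by linarith [Real.pi_pos], by linarith [Real.pi_pos]⟩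
  have hsc := Real.sin_sq_add_cos_sq (y / 2)
  have hs : Real.sin y = 2 * Real.sin (y / 2) * Real.cos (y / 2) := by
    rw [← Real.sin_two_mul]; ring_nf
  have hcy : Real.cos y = Real.cos (y / 2) ^ 2 - Real.sin (y / 2) ^ 2 := by
    rw [← Real.cos_two_mul']; ring_nf
  have habs : |Real.sin y| < 1 := by
    rw [← sq_lt_one_iff_abs_lt_one]
    nlinarith [Real.sin_sq_add_cos_sq y]
  rw [gaussHyp_sq habs]
  rw [hcy] at hc ⊢
  have hlt := abs_lt_of_sq_lt_sq (sub_pos.mp hc) hc2.le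
  rw [abs_lt] at hlt
  have hm : 0 < Real.cos (y / 2) - Real.sin (y / 2) := by linarith
  have hp : 0 < Real.cos (y / 2) + Real.sin (y / 2) := by linarith
  rw [show 1 - Real.sin y = (Real.cos (y / 2) - Real.sin (y / 2)) ^ 2 by
      rw [hs]; linear_combination -hsc,
    show 1 + Real.sin y = (Real.cos (y / 2) + Real.sin (y / 2)) ^ 2 by
      rw [hs]; linear_combination -hsc,
    Real.sqrt_sq hm.le, Real.sqrt_sq hp.le,
    show Real.cos (y / 2) ^ 2 - Real.sin (y / 2) ^ 2 =
      (Real.cos (y / 2) - Real.sin (y / 2)) * (Real.cos (y / 2) + Real.sin (y / 2)) by ring]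
  field_simp
  ring

theorem stmt_2 (κ : ℝ) (hκ : κ ∈ Set.Ioo (0 : ℝ) 1)
    (f : ℝ → ℝ)
    (hf : ∀ T : ℝ, f T = ∫ t in (0:ℝ)..T, gaussHyp (1/4) (3/4) (1/2) (κ^2 * Real.sin t ^ 2))
    (φ : ℝ → ℝ) (hφf : Function.LeftInverse φ f) (hfφ : Function.RightInverse φ f)
    (ψ : ℝ → ℝ) (hψ : ∀ u : ℝ, ψ u = Real.arcsin (κ * Real.sin (φ u)))
    (d : ℝ → ℝ) (hd : ∀ u : ℝ, d u = Real.cos (ψ u)) :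
    ∀ u : ℝ, HasDerivAt d (-2 * Real.sin (ψ u / 2) * (κ * Real.cos (φ u))) u := by
  obtain ⟨hκ0, hκ1⟩ := hκ
  have hlt : ∀ t, |κ * Real.sin t| < 1 := fun t => by
    rw [abs_mul, abs_of_pos hκ0]
    nlinarith [Real.abs_sin_le_one t, abs_nonneg (Real.sin t)]
  have hlo : ∀ t, -1 < κ * Real.sin t := fun t => (abs_lt.mp (hlt t)).1
  have hhi : ∀ t, κ * Real.sin t < 1 := fun t => (abs_lt.mp (hlt t)).2
  have hmem : ∀ t, Real.arcsin (κ * Real.sin t) ∈ Set.Ioo (-(π / 2)) (π / 2) := fun t =>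
    ⟨Real.neg_pi_div_two_lt_arcsin.mpr (hlo t), Real.arcsin_lt_pi_div_two.mpr (hhi t)⟩
  have hcos : ∀ t, 0 < Real.cos (Real.arcsin (κ * Real.sin t)) := fun t =>
    Real.cos_pos_of_mem_Ioo (hmem t)
  have hcos2 : ∀ t, 0 < Real.cos (Real.arcsin (κ * Real.sin t) / 2) := fun t =>
    Real.cos_pos_of_mem_Ioo ⟨by linarith [(hmem t).1, Real.pi_pos],
      by linarith [(hmem t).2, Real.pi_pos]⟩
  set g : ℝ → ℝ := fun t => Real.cos (Real.arcsin (κ * Real.sin t) / 2) /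
    Real.cos (Real.arcsin (κ * Real.sin t)) with hg
  have hgpos : ∀ t, 0 < g t := fun t => div_pos (hcos2 t) (hcos t)
  have hgF : ∀ t, gaussHyp (1/4) (3/4) (1/2) (κ^2 * Real.sin t ^ 2) = g t := fun t => by
    have h := gaussHyp_sin_sq (hmem t)
    rwa [Real.sin_arcsin (hlo t).le (hhi t).le, mul_pow] at h
  have hgc : Continuous g := by
    have ha : Continuous fun t => Real.arcsin (κ * Real.sin t) :=
      Real.continuous_arcsin.comp (by fun_prop)
    exact (Real.continuous_cos.comp (ha.div_const 2)).div (Real.continuous_cos.comp ha)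
      fun t => (hcos t).ne'
  have hf' : f = fun T => ∫ t in (0:ℝ)..T, g t := by
    funext T
    rw [hf]
    simp only [hgF]
  have hfd : ∀ T, HasDerivAt f (g T) T := fun T => by
    rw [hf']
    exact intervalIntegral.integral_hasDerivAt_right (hgc.intervalIntegrable _ _)
      hgc.aestronglyMeasurable.stronglyMeasurableAtFilter hgc.continuousAt
  have hfm : StrictMono f := strictMono_of_hasDerivAt_pos hfd hgpos
  have hφm : Monotone φ := fun a b hab => by
    rw [← hfm.le_iff_le, hfφ a, hfφ b]
    exact hab
  have hφc : Continuous φ := hφm.continuous_of_surjective hφf.surjective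
  intro u
  have hφd : HasDerivAt φ (g (φ u))⁻¹ u :=
    HasDerivAt.of_local_left_inverse hφc.continuousAt (hfd _) (hgpos _).ne'
      (Filter.Eventually.of_forall hfφ)
  have hd' : d = fun u => Real.cos (Real.arcsin (κ * Real.sin (φ u))) := by
    funext v
    rw [hd, hψ]
  have hasin :=
    (Real.hasDerivAt_arcsin (hlo (φ u)).ne' (hhi (φ u)).ne).comp u
      ((hφd.sin).const_mul κ)
  rw [hd', hψ]
  refine hasin.cos.congr_deriv ?_
  simp only [Function.comp_apply]
  rw [← Real.cos_arcsin, hg]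
  have hs : Real.sin (Real.arcsin (κ * Real.sin (φ u))) =
      2 * Real.sin (Real.arcsin (κ * Real.sin (φ u)) / 2) *
        Real.cos (Real.arcsin (κ * Real.sin (φ u)) / 2) := by
    rw [← Real.sin_two_mul]; ring_nf
  rw [hs]
  have h1 := (hcos (φ u)).ne'
  have h2 := (hcos2 (φ u)).ne'
  field_simp
end

section
/- Let κ ∈ (0,1), let f : ℝ → ℝ be defined by f(T) = ∫₀^T F(1/4, 3/4; 1/2; κ² sin² t) dt, let φ be the inverse of f, let ψ = arcsin(κ sin φ), and let I = f(π/2). Then for every u ∈ ℝ, ψ(u + 2I) = −ψ(u). -/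
/-!
The integrand `g t = F(1/4, 3/4; 1/2; κ² sin² t)` depends on `t` only through `sin² t`, so it is
`π`-periodic and symmetric about `π/2`. It is also continuous: the hypergeometric coefficients lie
in `[0, 1]`, so the series is dominated by the geometric series `∑ (κ²)ⁿ`. Hence
`f (T + π) = f T + 2 I`, which for the inverse says `φ (u + 2 I) = φ u + π`; the claim follows
since `sin (x + π) = -sin x` and `arcsin` is odd.
-/

open Real

/-- The coefficients of `F(1/4, 3/4; 1/2; x)` lie in `[0, 1]`: the ratio of consecutive ones is
`(1/4 + n)(3/4 + n) / ((1/2 + n)(1 + n)) ≤ 1`. -/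
lemma gaussHyp_coeff_mem (n : ℕ) :
    (ascPochhammer ℝ n).eval (1/4) * (ascPochhammer ℝ n).eval (3/4) /
      ((ascPochhammer ℝ n).eval (1/2) * (n.factorial : ℝ)) ∈ Set.Icc (0 : ℝ) 1 := by
  have h1 := ascPochhammer_pos n (1/4 : ℝ) (by norm_num)
  have h2 := ascPochhammer_pos n (3/4 : ℝ) (by norm_num)
  have h3 := ascPochhammer_pos n (1/2 : ℝ) (by norm_num)
  have h4 : (0 : ℝ) < n.factorial := by positivity
  refine ⟨by positivity, ?_⟩
  rw [div_le_one (by positivity)]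
  clear h1 h2 h3 h4
  induction n with
  | zero => simp
  | succ n ih =>
    have h1 := ascPochhammer_pos n (1/4 : ℝ) (by norm_num)
    have h2 := ascPochhammer_pos n (3/4 : ℝ) (by norm_num)
    have h3 := ascPochhammer_pos n (1/2 : ℝ) (by norm_num)
    rw [ascPochhammer_succ_eval, ascPochhammer_succ_eval, ascPochhammer_succ_eval,
      Nat.factorial_succ]
    push_cast
    have hn : (0 : ℝ) ≤ n := n.cast_nonneg
    have hr : (1/4 + n : ℝ) * (3/4 + n) ≤ (1/2 + n) * (n + 1) := by nlinarith
    have := mul_le_mul ih hr (by positivity) (by positivity)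
    linarith

lemma continuous_gaussHyp_sin {κ : ℝ} (hκ : κ ∈ Set.Ioo (0 : ℝ) 1) :
    Continuous fun t : ℝ => gaussHyp (1/4) (3/4) (1/2) (κ^2 * Real.sin t ^ 2) := by
  have hκ1 : κ ^ 2 < 1 := by nlinarith [hκ.1, hκ.2]
  unfold gaussHyp
  refine continuous_tsum (u := fun n : ℕ => (κ ^ 2) ^ n) (fun n => by fun_prop)
    (summable_geometric_of_lt_one (sq_nonneg κ) hκ1) fun n t => ?_
  obtain ⟨h0, h1⟩ := gaussHyp_coeff_mem n
  have hx : κ ^ 2 * Real.sin t ^ 2 ≤ κ ^ 2 :=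
    mul_le_of_le_one_right (sq_nonneg κ) (Real.sin_sq_le_one t)
  have hx0 : 0 ≤ κ ^ 2 * Real.sin t ^ 2 := by positivity
  rw [Real.norm_of_nonneg (mul_nonneg h0 (pow_nonneg hx0 n))]
  exact (mul_le_of_le_one_left (pow_nonneg hx0 n) h1).trans (pow_le_pow_left₀ hx0 hx n)

theorem stmt_9 (κ : ℝ) (hκ : κ ∈ Set.Ioo (0 : ℝ) 1)
    (f : ℝ → ℝ)
    (hf : ∀ T : ℝ, f T = ∫ t in (0:ℝ)..T, gaussHyp (1/4) (3/4) (1/2) (κ^2 * Real.sin t ^ 2))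
    (φ : ℝ → ℝ) (hφf : Function.LeftInverse φ f) (hfφ : Function.RightInverse φ f)
    (ψ : ℝ → ℝ) (hψ : ∀ u : ℝ, ψ u = Real.arcsin (κ * Real.sin (φ u)))
    (I : ℝ) (hI : I = f (π/2)) :
    ∀ u : ℝ, ψ (u + 2 * I) = -ψ u := by
  have hc := continuous_gaussHyp_sin hκ
  set g : ℝ → ℝ := fun t => gaussHyp (1/4) (3/4) (1/2) (κ^2 * Real.sin t ^ 2) with hg
  have hf' : ∀ T, f T = ∫ t in (0:ℝ)..T, g t := hf
  have hint : ∀ a b, IntervalIntegrable g MeasureTheory.volume a b :=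
    fun a b => hc.intervalIntegrable a b
  have hper : Function.Periodic g π := fun t => by simp [hg, Real.sin_add_pi]
  have hsymm : ∀ t, g (π - t) = g t := fun t => by simp [hg, Real.sin_pi_sub]
  have hpi : f π = 2 * I := by
    have h : ∫ t in (π/2)..π, g t = ∫ t in (0:ℝ)..(π/2), g t := by
      have := intervalIntegral.integral_comp_sub_left (a := 0) (b := π/2) g π
      simp only [hsymm, sub_zero, sub_half] at this
      exact this.symm
    rw [hI, hf', hf', ← intervalIntegral.integral_add_adjacent_intervals (hint 0 (π/2)) (hint _ π),
      h, two_mul]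
  have hshift : ∀ T, f (T + π) = f T + 2 * I := fun T => by
    have h := hper.intervalIntegral_add_eq T 0
    rw [zero_add] at h
    rw [← hpi, hf', hf', hf', ← h, intervalIntegral.integral_add_adjacent_intervals (hint _ _) (hint _ _)]
  intro u
  have hφ : φ (u + 2 * I) = φ u + π := by
    rw [← hφf (φ u + π), hshift, hfφ u]
  rw [hψ, hψ, hφ, Real.sin_add_pi, mul_neg, Real.arcsin_neg]
end

section
/- For every λ with 0 < λ < 1, √(1 + λ) · F(1/4, 3/4; 1; λ²) = F(1/2, 1/2; 1; 2λ/(1 + λ)), where F denotes the Gauss hypergeometric series. -/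
/-!
Both sides are termwise expansions of the same integral. Write `a n = (1/2)_n / n!`, so that
`1 / √(1 - t) = ∑ a n * t ^ n` for `|t| < 1`. If `g` is continuous with `|g| ≤ 1` and `|y| < 1`,
integrating termwise over `[0, π]` gives
`∑ a n * y ^ n * ∫ g ^ n = ∫ 1 / √(1 - y g)` (`hasSum_integral_pow`).

* For `g θ = cos² θ` the moments are `∫ cos ^ (2n) = π * a n`, and the sum is
  `π * F(1/2, 1/2; 1; y)`.
* For `g θ = cos 2θ` the odd moments vanish and the even ones are again `π * a n`; since
  `a (2n) * a n = (1/4)_n (3/4)_n / (n!)²`, the sum is `π * F(1/4, 3/4; 1; y²)`.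

With `z = 2λ / (1 + λ)` the double-angle formula gives
`1 - z cos² θ = (1 - λ cos 2θ) / (1 + λ)`, so the two integrands differ by the constant factor
`√(1 + λ)`.
-/

open Real

/-- The coefficient `(1/2)_n / n!` of `t ^ n` in the expansion of `1 / √(1 - t)`. -/
noncomputable def halfCoeff (n : ℕ) : ℝ :=
  (ascPochhammer ℝ n).eval (1/2) / (n.factorial : ℝ)

lemma halfCoeff_zero : halfCoeff 0 = 1 := by simp [halfCoeff]

lemma halfCoeff_succ (n : ℕ) :
    halfCoeff (n + 1) = (2 * n + 1) / (2 * n + 2) * halfCoeff n := by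
  have h : (n.factorial : ℝ) ≠ 0 := by positivity
  have h1 : (n : ℝ) + 1 ≠ 0 := by positivity
  rw [halfCoeff, halfCoeff, ascPochhammer_succ_eval, Nat.factorial_succ]
  push_cast
  field_simp
  ring

lemma halfCoeff_nonneg (n : ℕ) : 0 ≤ halfCoeff n := by
  induction n with
  | zero => simp [halfCoeff_zero]
  | succ n ih => rw [halfCoeff_succ]; positivity

lemma ascPochhammer_eval_one_eq_factorial (n : ℕ) :
    (ascPochhammer ℝ n).eval 1 = (n.factorial : ℝ) := by
  rw [ascPochhammer_eval_one]

/-- The duplication formula `(1/2)_{2n} = 4 ^ n (1/4)_n (3/4)_n`, divided by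
`(2n)! = 4 ^ n (1/2)_n n!`. -/
lemma halfCoeff_two_mul_mul (n : ℕ) :
    halfCoeff (2 * n) * halfCoeff n =
      (ascPochhammer ℝ n).eval (1/4) * (ascPochhammer ℝ n).eval (3/4) /
        ((ascPochhammer ℝ n).eval 1 * (n.factorial : ℝ)) := by
  rw [ascPochhammer_eval_one_eq_factorial]
  induction n with
  | zero => simp [halfCoeff_zero]
  | succ n ih =>
    have h : (n.factorial : ℝ) ≠ 0 := by positivity
    have h1 : (n : ℝ) + 1 ≠ 0 := by positivity
    have h2 : (2 * n : ℝ) + 1 ≠ 0 := by positivity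
    have e : 2 * (n + 1) = 2 * n + 1 + 1 := by ring
    rw [e, halfCoeff_succ, halfCoeff_succ, halfCoeff_succ, ascPochhammer_succ_eval,
      ascPochhammer_succ_eval, Nat.factorial_succ]
    rw [eq_div_iff (by positivity)] at ih
    rw [eq_div_iff (by positivity)]
    push_cast
    field_simp
    linear_combination 16 * (n + 1) * (4 * n + 1) * (4 * n + 3) * ih

lemma multichoose_half (n : ℕ) : Ring.multichoose (1/2 : ℝ) n = halfCoeff n := by
  rw [halfCoeff, ← Polynomial.ascPochhammer_smeval_eq_eval,
    ← Ring.factorial_nsmul_multichoose_eq_ascPochhammer, nsmul_eq_mul,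
    mul_div_cancel_left₀ _ (by positivity)]

lemma hasSum_halfCoeff {t : ℝ} (ht : |t| < 1) :
    HasSum (fun n => halfCoeff n * t ^ n) (1 / √(1 - t)) := by
  have h := (Real.one_div_one_sub_rpow_hasFPowerSeriesOnBall_zero (1/2)).hasSum (y := t)
    (by simpa [← ofReal_norm] using ht)
  rw [zero_add, ← Real.sqrt_eq_rpow] at h
  simpa only [FormalMultilinearSeries.ofScalars_apply_eq, ← Ring.multichoose_eq,
    multichoose_half, smul_eq_mul] using h

lemma hasSum_integral_pow {g : ℝ → ℝ} (hg : Continuous g) (hg1 : ∀ θ, |g θ| ≤ 1) {y : ℝ}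
    (hy : |y| < 1) :
    HasSum (fun n => halfCoeff n * y ^ n * ∫ θ in (0:ℝ)..π, g θ ^ n)
      (∫ θ in (0:ℝ)..π, 1 / √(1 - y * g θ)) := by
  have hs : Summable fun n => halfCoeff n * |y| ^ n :=
    (hasSum_halfCoeff (t := |y|) (by simpa using hy)).summable
  have key := intervalIntegral.hasSum_integral_of_dominated_convergence
    (μ := MeasureTheory.volume) (a := 0) (b := π)
    (F := fun n θ => halfCoeff n * y ^ n * g θ ^ n) (f := fun θ => 1 / √(1 - y * g θ))
    (fun n _ => halfCoeff n * |y| ^ n)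
    (fun n => Continuous.aestronglyMeasurable (by fun_prop))
    (fun n => Filter.Eventually.of_forall fun θ _ => by
      rw [norm_mul, norm_mul, norm_pow, norm_pow, Real.norm_eq_abs, Real.norm_eq_abs,
        Real.norm_eq_abs, abs_of_nonneg (halfCoeff_nonneg n)]
      exact mul_le_of_le_one_right (mul_nonneg (halfCoeff_nonneg n) (by positivity))
        (pow_le_one₀ (abs_nonneg _) (hg1 θ)))
    (Filter.Eventually.of_forall fun _ _ => hs)
    intervalIntegrable_const
    (Filter.Eventually.of_forall fun θ _ => by
      have := hasSum_halfCoeff (t := y * g θ) (by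
        rw [abs_mul]
        exact (mul_le_of_le_one_right (abs_nonneg _) (hg1 θ)).trans_lt hy)
      simpa only [mul_pow, mul_assoc] using this)
  simpa only [intervalIntegral.integral_const_mul] using key

lemma integral_cos_pow_even (k n : ℕ) :
    ∫ θ in (0:ℝ)..(k * π), cos θ ^ (2 * n) = k * π * halfCoeff n := by
  induction n with
  | zero => simp [halfCoeff_zero]
  | succ n ih =>
    rw [show 2 * (n + 1) = 2 * n + 2 by ring, integral_cos_pow, ih, halfCoeff_succ]
    simp only [Real.sin_nat_mul_pi, Real.sin_zero]
    push_cast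
    ring

lemma integral_cos_pow_odd_eq_zero (n : ℕ) :
    ∫ θ in (0:ℝ)..(2 * π), cos θ ^ (2 * n + 1) = 0 := by
  induction n with
  | zero => simp
  | succ n ih =>
    rw [show 2 * (n + 1) + 1 = 2 * n + 1 + 2 by ring, integral_cos_pow, ih]
    simp

lemma integral_cos_two_mul_pow (n : ℕ) :
    ∫ θ in (0:ℝ)..π, cos (2 * θ) ^ n = 2⁻¹ * ∫ θ in (0:ℝ)..(2 * π), cos θ ^ n := by
  rw [intervalIntegral.integral_comp_mul_left (fun θ => cos θ ^ n) two_ne_zero]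
  simp

lemma integral_eq_pi_mul_gaussHyp_half {y : ℝ} (hy : |y| < 1) :
    ∫ θ in (0:ℝ)..π, 1 / √(1 - y * cos θ ^ 2) = π * gaussHyp (1/2) (1/2) 1 y := by
  have h := hasSum_integral_pow (g := fun θ => cos θ ^ 2) (by fun_prop)
    (fun θ => by rw [abs_of_nonneg (sq_nonneg _)]; exact cos_sq_le_one θ) hy
  rw [gaussHyp, ← tsum_mul_left, ← h.tsum_eq]
  congr 1
  ext n
  have hm := integral_cos_pow_even 1 n
  rw [Nat.cast_one, one_mul] at hm
  simp only [← pow_mul]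
  rw [hm, ascPochhammer_eval_one_eq_factorial, halfCoeff]
  ring

lemma integral_eq_pi_mul_gaussHyp_quarter {y : ℝ} (hy : |y| < 1) :
    ∫ θ in (0:ℝ)..π, 1 / √(1 - y * cos (2 * θ)) = π * gaussHyp (1/4) (3/4) 1 (y ^ 2) := by
  have h := hasSum_integral_pow (g := fun θ => cos (2 * θ)) (by fun_prop)
    (fun θ => abs_cos_le_one _) hy
  -- The odd terms vanish, so the sum may be taken over the even indices only.
  rw [← Function.Injective.hasSum_iff (g := fun n : ℕ => 2 * n)
    (fun a b hab => by simpa using hab)] at h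
  · rw [gaussHyp, ← tsum_mul_left, ← h.tsum_eq]
    congr 1
    ext n
    have hm := integral_cos_pow_even 2 n
    rw [Nat.cast_ofNat] at hm
    simp only [Function.comp]
    rw [integral_cos_two_mul_pow, hm, ← halfCoeff_two_mul_mul, pow_mul]
    ring
  · intro m hm
    obtain ⟨k, rfl | rfl⟩ := m.even_or_odd'
    · exact absurd ⟨k, rfl⟩ hm
    · rw [integral_cos_two_mul_pow, integral_cos_pow_odd_eq_zero, mul_zero, mul_zero]

theorem stmt_12 (lam : ℝ) (hlam : 0 < lam) (hlam1 : lam < 1) :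
    Real.sqrt (1 + lam) * gaussHyp (1/4) (3/4) 1 (lam^2) =
      gaussHyp (1/2) (1/2) 1 (2 * lam / (1 + lam)) := by
  have hpos : 0 < 1 + lam := by linarith
  have hz : |2 * lam / (1 + lam)| < 1 := by
    rw [abs_of_pos (by positivity), div_lt_one hpos]
    linarith
  apply mul_left_cancel₀ pi_ne_zero
  rw [← integral_eq_pi_mul_gaussHyp_half hz, mul_left_comm,
    ← integral_eq_pi_mul_gaussHyp_quarter (by rwa [abs_of_pos hlam]),
    ← intervalIntegral.integral_const_mul]
  congr 1
  ext θ
  have e : 1 - 2 * lam / (1 + lam) * cos θ ^ 2 = (1 - lam * cos (2 * θ)) / (1 + lam) := by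
    rw [cos_two_mul]
    field_simp
    ring
  rw [e, Real.sqrt_div' _ hpos.le, one_div_div, mul_one_div]
end

section
/- For every x with 0 < x < 1, √(1 + x) · F(1/4, 3/4; 1; 1 − x²) = √2 · F(1/2, 1/2; 1; (1 − x)/(1 + x)), where F denotes the Gauss hypergeometric series. -/
/-!
Put `m = (1 - x) / (1 + x)`, so that `1 - x² = s(m)` with `s(m) = 4m / (1 + m)²`. The claim becomes
the quadratic transformation `F(1/4, 3/4; 1; s(m)) / √(1 + m) = F(1/2, 1/2; 1; m)` for `0 < m < 1`.

When `a + b = 1`, the hypergeometric equation of `H = F(a, b; 1; ·)` has the self-adjoint form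
`(t (1 - t) H')' = a b H` (`hasDerivAt_gaussFlux`, a comparison of coefficients). Substituting `s(m)`
shows that `g(m) = F(1/4, 3/4; 1; s(m)) / √(1 + m)` satisfies `(m (1 - m) g')' = g / 4`
(`hasDerivAt_pullback`, `hasDerivAt_pullbackFlux`), the same equation as `y = F(1/2, 1/2; 1; ·)`.
Hence the Wronskian `m (1 - m) (y g' - y' g)` is constant; it vanishes at `m = 0`, so `g / y` is
constant as well (`pullback_eq`), equal to its value `1` at `m = 0`.
-/

open Real

/-! ### Power series -/

/-- Termwise differentiation of a power series on `(-1, 1)` when the coefficients grow at most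
linearly. -/
lemma hasDerivAt_powerSeries (c : ℕ → ℝ) (C : ℝ) (hc : ∀ n, |c n| ≤ C * (n + 1)) (x : ℝ)
    (hx : |x| < 1) :
    HasDerivAt (fun y => ∑' n, c n * y ^ n) (∑' n : ℕ, ((n : ℝ) + 1) * c (n + 1) * x ^ n) x := by
  obtain ⟨r, hxr, hr1⟩ := exists_between hx
  have hr0 : 0 < r := (abs_nonneg x).trans_lt hxr
  have hrn : ‖r‖ < 1 := by rwa [Real.norm_of_nonneg hr0.le]
  have hS : Summable (fun n : ℕ => C * (r⁻¹ * ((n : ℝ) ^ 2 * r ^ n + (n : ℝ) ^ 1 * r ^ n))) :=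
    (((summable_pow_mul_geometric_of_norm_lt_one 2 hrn).add
      (summable_pow_mul_geometric_of_norm_lt_one 1 hrn)).mul_left _).mul_left _
  have hbd : ∀ (n : ℕ) (y : ℝ), y ∈ Set.Ioo (-r) r →
      ‖c n * ((n : ℝ) * y ^ (n - 1))‖ ≤
        C * (r⁻¹ * ((n : ℝ) ^ 2 * r ^ n + (n : ℝ) ^ 1 * r ^ n)) := by
    intro n y hy
    have hy' : |y| ≤ r := (abs_lt.2 hy).le
    rcases n with _ | n
    · simp
    · rw [Real.norm_eq_abs, abs_mul, abs_mul, abs_pow, Nat.add_sub_cancel, Nat.abs_cast]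
      have h1 : |y| ^ n ≤ r ^ n := pow_le_pow_left₀ (abs_nonneg _) hy' n
      calc |c (n + 1)| * (((n + 1 : ℕ) : ℝ) * |y| ^ n)
          ≤ (C * (((n + 1 : ℕ) : ℝ) + 1)) * (((n + 1 : ℕ) : ℝ) * r ^ n) := by
            apply mul_le_mul (hc _) _ (by positivity) ((abs_nonneg _).trans (hc _))
            exact mul_le_mul_of_nonneg_left h1 (by positivity)
        _ = _ := by field_simp; ring
  have hx' : x ∈ Set.Ioo (-r) r := abs_lt.1 hxr
  have h0 : (0 : ℝ) ∈ Set.Ioo (-r) r := ⟨by linarith, hr0⟩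
  have key := hasDerivAt_tsum_of_isPreconnected (g := fun n y => c n * y ^ n)
    (g' := fun n y => c n * ((n : ℝ) * y ^ (n - 1))) hS isOpen_Ioo isPreconnected_Ioo
    (fun n y _ => (hasDerivAt_pow n y).const_mul (c n)) hbd h0
    (summable_of_ne_finset_zero (s := {0}) (by
      intro n hn
      have : n ≠ 0 := by simpa using hn
      simp [this])) hx'
  have hs : Summable (fun n : ℕ => c n * ((n : ℝ) * x ^ (n - 1))) :=
    Summable.of_norm_bounded hS (fun n => hbd n x hx')
  refine key.congr_deriv ?_
  rw [hs.tsum_eq_zero_add]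
  simp only [Nat.cast_zero, zero_mul, mul_zero, zero_add, Nat.add_sub_cancel]
  refine tsum_congr fun n => ?_
  push_cast
  ring

/-! ### The series `F(a, b; 1; ·)` and its differential equation -/

/-- The `n`-th Taylor coefficient of `F(a, b; 1; ·)`. -/
noncomputable def gaussCoeff (a b : ℝ) (n : ℕ) : ℝ :=
  (ascPochhammer ℝ n).eval a * (ascPochhammer ℝ n).eval b /
    ((ascPochhammer ℝ n).eval 1 * (n.factorial : ℝ))

lemma gaussHyp_eq (a b x : ℝ) : gaussHyp a b 1 x = ∑' n, gaussCoeff a b n * x ^ n := rfl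

lemma gaussCoeff_zero (a b : ℝ) : gaussCoeff a b 0 = 1 := by simp [gaussCoeff]

lemma gaussCoeff_succ (a b : ℝ) (n : ℕ) :
    ((n : ℝ) + 1) ^ 2 * gaussCoeff a b (n + 1) = (a + n) * (b + n) * gaussCoeff a b n := by
  have h1 : (ascPochhammer ℝ n).eval 1 = (n.factorial : ℝ) := by simp
  have h2 : (n.factorial : ℝ) ≠ 0 := by positivity
  have h3 : (n : ℝ) + 1 ≠ 0 := by positivity
  have h4 : (1 : ℝ) + n ≠ 0 := by positivity
  simp only [gaussCoeff, ascPochhammer_succ_eval, h1, Nat.factorial_succ, Nat.cast_mul,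
    Nat.cast_add, Nat.cast_one]
  field_simp
  ring

lemma gaussCoeff_bounds {a b : ℝ} (ha : 0 < a) (ha1 : a ≤ 1) (hb : 0 < b) (hb1 : b ≤ 1) (n : ℕ) :
    0 ≤ gaussCoeff a b n ∧ gaussCoeff a b n ≤ 1 := by
  induction n with
  | zero => simp [gaussCoeff_zero]
  | succ n ih =>
    obtain ⟨h0, h1⟩ := ih
    have hs := gaussCoeff_succ a b n
    have hn : (0 : ℝ) ≤ n := n.cast_nonneg
    have hpos : (0 : ℝ) < ((n : ℝ) + 1) ^ 2 := by positivity
    have hle : (a + n) * (b + n) ≤ ((n : ℝ) + 1) ^ 2 := by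
      rw [sq]
      exact mul_le_mul (by linarith) (by linarith) (by linarith) (by linarith)
    refine ⟨?_, ?_⟩
    · refine nonneg_of_mul_nonneg_right (a := ((n : ℝ) + 1) ^ 2) ?_ hpos
      rw [hs]
      positivity
    · refine le_of_mul_le_mul_left (a := ((n : ℝ) + 1) ^ 2) ?_ hpos
      rw [hs]
      exact mul_le_mul hle h1 h0 hpos.le

/-- The series of the derivative of `F(a, b; 1; ·)`. -/
noncomputable def gaussDeriv (a b x : ℝ) : ℝ :=
  ∑' n : ℕ, ((n : ℝ) + 1) * gaussCoeff a b (n + 1) * x ^ n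

/-- The flux `x (1 - x) F'(x)` occurring in the self-adjoint hypergeometric equation. -/
noncomputable def gaussFlux (a b x : ℝ) : ℝ := x * (1 - x) * gaussDeriv a b x

lemma hasDerivAt_gaussHyp {a b : ℝ} (ha : 0 < a) (ha1 : a ≤ 1) (hb : 0 < b) (hb1 : b ≤ 1) {x : ℝ}
    (hx : |x| < 1) : HasDerivAt (gaussHyp a b 1) (gaussDeriv a b x) x := by
  refine hasDerivAt_powerSeries (gaussCoeff a b) 1 (fun n => ?_) x hx
  obtain ⟨h0, h1⟩ := gaussCoeff_bounds ha ha1 hb hb1 n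
  rw [abs_of_nonneg h0]
  have hn : (0 : ℝ) ≤ n := n.cast_nonneg
  linarith

/-- The Taylor coefficients of the flux `x (1 - x) F'(x)`. -/
noncomputable def fluxCoeff (a b : ℝ) : ℕ → ℝ
  | 0 => 0
  | n + 1 => ((n : ℝ) + 1) * gaussCoeff a b (n + 1) - n * gaussCoeff a b n

lemma gaussFlux_eq {a b : ℝ} (ha : 0 < a) (ha1 : a ≤ 1) (hb : 0 < b) (hb1 : b ≤ 1) {x : ℝ}
    (hx : |x| < 1) : gaussFlux a b x = ∑' n, fluxCoeff a b n * x ^ n := by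
  have hT : Summable (fun n : ℕ => (n : ℝ) * gaussCoeff a b n * x ^ n) := by
    refine Summable.of_norm_bounded
      (summable_pow_mul_geometric_of_norm_lt_one (r := |x|) 1 (by simpa using hx)) fun n => ?_
    obtain ⟨h0, h1⟩ := gaussCoeff_bounds ha ha1 hb hb1 n
    rw [Real.norm_eq_abs, abs_mul, abs_mul, abs_pow, Nat.abs_cast, abs_of_nonneg h0, pow_one]
    exact mul_le_mul_of_nonneg_right (mul_le_of_le_one_right n.cast_nonneg h1) (by positivity)
  have hT1 : Summable (fun n : ℕ => ((n : ℝ) + 1) * gaussCoeff a b (n + 1) * x ^ (n + 1)) := by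
    have := (summable_nat_add_iff 1).2 hT
    simpa using this
  have e1 : x * gaussDeriv a b x =
      ∑' n : ℕ, ((n : ℝ) + 1) * gaussCoeff a b (n + 1) * x ^ (n + 1) := by
    rw [gaussDeriv, ← tsum_mul_left]
    exact tsum_congr fun n => by ring
  have e2 : x * gaussDeriv a b x = ∑' n : ℕ, (n : ℝ) * gaussCoeff a b n * x ^ n := by
    rw [e1, hT.tsum_eq_zero_add]
    simp
  have hF : (fun n : ℕ => fluxCoeff a b (n + 1) * x ^ (n + 1)) = fun n : ℕ =>
      ((n : ℝ) + 1) * gaussCoeff a b (n + 1) * x ^ (n + 1)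
        - x * ((n : ℝ) * gaussCoeff a b n * x ^ n) := by
    funext n
    simp only [fluxCoeff]
    ring
  have hS : Summable (fun n : ℕ => fluxCoeff a b n * x ^ n) := by
    rw [← summable_nat_add_iff 1, hF]
    exact hT1.sub (hT.mul_left x)
  rw [hS.tsum_eq_zero_add, hF, hT1.tsum_sub (hT.mul_left x), tsum_mul_left, ← e1, ← e2]
  simp only [fluxCoeff, gaussFlux]
  ring

/-- The hypergeometric equation of `F(a, b; 1; ·)` for `a + b = 1`, in self-adjoint form. -/
lemma hasDerivAt_gaussFlux {a b : ℝ} (ha : 0 < a) (hb : 0 < b) (hab : a + b = 1) {x : ℝ}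
    (hx : |x| < 1) : HasDerivAt (gaussFlux a b) (a * b * gaussHyp a b 1 x) x := by
  have ha1 : a ≤ 1 := by linarith
  have hb1 : b ≤ 1 := by linarith
  have hd := hasDerivAt_powerSeries (fluxCoeff a b) 1 (fun n => by
    rcases n with _ | n
    · simp [fluxCoeff]
    · obtain ⟨h0, h1⟩ := gaussCoeff_bounds ha ha1 hb hb1 n
      obtain ⟨h2, h3⟩ := gaussCoeff_bounds ha ha1 hb hb1 (n + 1)
      have hn : (0 : ℝ) ≤ n := n.cast_nonneg
      have p1 := mul_nonneg hn h0
      have p2 := mul_le_of_le_one_right hn h1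
      have p3 := mul_nonneg (by linarith : (0 : ℝ) ≤ (n : ℝ) + 1) h2
      have p4 := mul_le_of_le_one_right (by linarith : (0 : ℝ) ≤ (n : ℝ) + 1) h3
      simp only [fluxCoeff]
      push_cast
      rw [abs_le]
      constructor <;> linarith) x hx
  have hval : ∑' n : ℕ, ((n : ℝ) + 1) * fluxCoeff a b (n + 1) * x ^ n =
      a * b * gaussHyp a b 1 x := by
    rw [gaussHyp_eq, ← tsum_mul_left]
    refine tsum_congr fun n => ?_
    have hs := gaussCoeff_succ a b n
    simp only [fluxCoeff]
    obtain rfl : b = 1 - a := by linarith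
    linear_combination x ^ n * hs
  rw [hval] at hd
  refine hd.congr_of_eventuallyEq ?_
  filter_upwards [(isOpen_lt continuous_abs continuous_const).mem_nhds hx] with y hy
  exact gaussFlux_eq ha ha1 hb hb1 hy

lemma gaussHyp_zero (a b : ℝ) : gaussHyp a b 1 0 = 1 := by
  rw [gaussHyp_eq, tsum_eq_single 0 (fun n hn => by simp [hn])]
  simp [gaussCoeff_zero]

lemma gaussHyp_pos {a b : ℝ} (ha : 0 < a) (ha1 : a ≤ 1) (hb : 0 < b) (hb1 : b ≤ 1) {x : ℝ}
    (hx0 : 0 ≤ x) (hx : x < 1) : 0 < gaussHyp a b 1 x := by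
  have hc := gaussCoeff_bounds ha ha1 hb hb1
  have hS : Summable (fun n : ℕ => gaussCoeff a b n * x ^ n) :=
    Summable.of_nonneg_of_le (fun n => mul_nonneg (hc n).1 (pow_nonneg hx0 n))
      (fun n => mul_le_of_le_one_left (pow_nonneg hx0 n) (hc n).2)
      (summable_geometric_of_lt_one hx0 hx)
  rw [gaussHyp_eq]
  exact hS.tsum_pos (fun n => mul_nonneg (hc n).1 (pow_nonneg hx0 n)) 0 (by simp [gaussCoeff_zero])

/-! ### The quadratic substitution -/

/-- The quadratic substitution `s(m) = 4m / (1 + m)²`. -/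
noncomputable def quadSub (m : ℝ) : ℝ := 4 * m / (1 + m) ^ 2

lemma abs_quadSub_lt {m : ℝ} (h0 : 0 ≤ m) (h1 : m < 1) : |quadSub m| < 1 := by
  have hp : 0 < (1 + m) ^ 2 := by positivity
  rw [quadSub, abs_of_nonneg (by positivity), div_lt_one hp]
  nlinarith [mul_pos (sub_pos.2 h1) (sub_pos.2 h1)]

lemma hasDerivAt_quadSub {m : ℝ} (h0 : 0 ≤ m) :
    HasDerivAt quadSub (4 * (1 - m) / (1 + m) ^ 3) m := by
  have hp : 1 + m ≠ 0 := by positivity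
  have h := ((hasDerivAt_id m).const_mul 4).div (((hasDerivAt_id m).const_add 1).pow 2)
    (pow_ne_zero 2 hp)
  refine h.congr_deriv ?_
  simp only [id, Pi.pow_apply]
  push_cast
  field_simp
  ring

lemma hasDerivAt_sqrt_one_add {m : ℝ} (h0 : 0 ≤ m) :
    HasDerivAt (fun m : ℝ => √(1 + m)) (1 / (2 * √(1 + m))) m :=
  ((hasDerivAt_id m).const_add 1).sqrt (by positivity)

/-- The pullback `g(m) = F(1/4, 3/4; 1; s(m)) / √(1 + m)`. -/
noncomputable def pullback (m : ℝ) : ℝ := gaussHyp (1 / 4) (3 / 4) 1 (quadSub m) / √(1 + m)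

/-- The flux `m (1 - m) g'(m)` of the pullback, written without derivatives of `g` by means of
`m (1 - m) s'(m) = (1 + m) s(m) (1 - s(m))`. -/
noncomputable def pullbackFlux (m : ℝ) : ℝ :=
  √(1 + m) * gaussFlux (1 / 4) (3 / 4) (quadSub m)
    - m * (1 - m) / (2 * (1 + m) * √(1 + m)) * gaussHyp (1 / 4) (3 / 4) 1 (quadSub m)

lemma hasDerivAt_pullback {m : ℝ} (h0 : 0 ≤ m) (h1 : m < 1) :
    ∃ g', HasDerivAt pullback g' m ∧ m * (1 - m) * g' = pullbackFlux m := by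
  have hH := (hasDerivAt_gaussHyp (a := 1 / 4) (b := 3 / 4) (by norm_num) (by norm_num)
    (by norm_num) (by norm_num) (abs_quadSub_lt h0 h1)).comp m (hasDerivAt_quadSub h0)
  have hp : (0 : ℝ) < 1 + m := by positivity
  have hr : 0 < √(1 + m) := Real.sqrt_pos.2 hp
  refine ⟨_, hH.div (hasDerivAt_sqrt_one_add h0) hr.ne', ?_⟩
  simp only [Function.comp, pullbackFlux, gaussFlux]
  have hr2 : √(1 + m) ^ 2 = 1 + m := Real.sq_sqrt hp.le
  generalize gaussHyp (1 / 4) (3 / 4) 1 (quadSub m) = H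
  generalize gaussDeriv (1 / 4) (3 / 4) (quadSub m) = D
  -- In terms of `r = √(1 + m)` the claim is an identity of rational functions.
  have hm : m = √(1 + m) ^ 2 - 1 := by rw [hr2]; ring
  simp only [quadSub]
  generalize √(1 + m) = r at *
  subst hm
  have hr' : r ≠ 0 := hr.ne'
  rw [show (1 : ℝ) + (r ^ 2 - 1) = r ^ 2 by ring]
  field_simp
  ring

/-- The pullback satisfies `(m (1 - m) g')' = g / 4`, the equation of `F(1/2, 1/2; 1; ·)`. -/
lemma hasDerivAt_pullbackFlux {m : ℝ} (h0 : 0 ≤ m) (h1 : m < 1) :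
    HasDerivAt pullbackFlux (pullback m / 4) m := by
  have hs1 := abs_quadSub_lt h0 h1
  have hH := (hasDerivAt_gaussHyp (a := 1 / 4) (b := 3 / 4) (by norm_num) (by norm_num)
    (by norm_num) (by norm_num) hs1).comp m (hasDerivAt_quadSub h0)
  have hP := (hasDerivAt_gaussFlux (a := 1 / 4) (b := 3 / 4) (by norm_num) (by norm_num)
    (by norm_num) hs1).comp m (hasDerivAt_quadSub h0)
  have hp : (0 : ℝ) < 1 + m := by positivity
  have hr : 0 < √(1 + m) := Real.sqrt_pos.2 hp
  have hsq := hasDerivAt_sqrt_one_add h0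
  have hnum := (hasDerivAt_id m).mul ((hasDerivAt_id m).const_sub 1)
  have hden := (((hasDerivAt_id m).const_add 1).const_mul 2).mul hsq
  have hq := hnum.div hden (by simp only [Pi.mul_apply, id]; positivity)
  have key := (hsq.mul hP).sub (hq.mul hH)
  refine key.congr_deriv ?_
  simp only [Function.comp, pullback, gaussFlux, Pi.mul_apply, Pi.div_apply, id]
  have hr2 : √(1 + m) ^ 2 = 1 + m := Real.sq_sqrt hp.le
  generalize gaussHyp (1 / 4) (3 / 4) 1 (quadSub m) = H
  generalize gaussDeriv (1 / 4) (3 / 4) (quadSub m) = D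
  -- In terms of `r = √(1 + m)` the claim is an identity of rational functions.
  have hm : m = √(1 + m) ^ 2 - 1 := by rw [hr2]; ring
  simp only [quadSub]
  generalize √(1 + m) = r at *
  subst hm
  have hr' : r ≠ 0 := hr.ne'
  rw [show (1 : ℝ) + (r ^ 2 - 1) = r ^ 2 by ring]
  field_simp
  ring

/-! ### The Wronskian argument -/

/-- A continuous function on `[0, 1)` whose derivative vanishes on `(0, 1)` is constant. -/
lemma eq_value_zero_of_deriv_zero {f : ℝ → ℝ} (hc : ∀ t, 0 ≤ t → t < 1 → ContinuousAt f t)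
    (hd : ∀ t, 0 < t → t < 1 → HasDerivAt f 0 t) {m : ℝ} (h0 : 0 < m) (h1 : m < 1) :
    f m = f 0 := by
  obtain ⟨c, _, hc'⟩ := exists_hasDerivAt_eq_slope f (fun _ => 0) h0
    (fun t ht => (hc t ht.1 (ht.2.trans_lt h1)).continuousWithinAt)
    (fun t ht => hd t ht.1 (ht.2.trans h1))
  have : m - 0 ≠ 0 := by simpa using h0.ne'
  field_simp at hc'
  linarith

/-- The quadratic transformation `F(1/4, 3/4; 1; s(m)) / √(1 + m) = F(1/2, 1/2; 1; m)`. -/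
lemma pullback_eq {m : ℝ} (h0 : 0 < m) (h1 : m < 1) :
    pullback m = gaussHyp (1 / 2) (1 / 2) 1 m := by
  set y := gaussHyp (1 / 2) (1 / 2) 1 with hy
  set p := gaussFlux (1 / 2) (1 / 2) with hp
  have dy : ∀ t, 0 ≤ t → t < 1 → HasDerivAt y (gaussDeriv (1 / 2) (1 / 2) t) t := fun t a b =>
    hasDerivAt_gaussHyp (by norm_num) (by norm_num) (by norm_num) (by norm_num)
      (by rwa [abs_of_nonneg a])
  have dp : ∀ t, 0 ≤ t → t < 1 → HasDerivAt p (1 / 2 * (1 / 2) * y t) t := fun t a b =>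
    hasDerivAt_gaussFlux (by norm_num) (by norm_num) (by norm_num) (by rwa [abs_of_nonneg a])
  have ypos : ∀ t, 0 ≤ t → t < 1 → 0 < y t := fun t a b =>
    gaussHyp_pos (by norm_num) (by norm_num) (by norm_num) (by norm_num) a b
  -- The Wronskian, expressed through the two fluxes so that no second derivatives enter.
  have dW : ∀ t, 0 ≤ t → t < 1 →
      HasDerivAt (fun t => y t * pullbackFlux t - p t * pullback t) 0 t := by
    intro t a b
    obtain ⟨g', hg, hg'⟩ := hasDerivAt_pullback a b
    have h := ((dy t a b).mul (hasDerivAt_pullbackFlux a b)).sub ((dp t a b).mul hg)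
    refine h.congr_deriv ?_
    rw [← hg', hp, gaussFlux]
    ring
  have W0 : ∀ t, 0 < t → t < 1 → y t * pullbackFlux t - p t * pullback t = 0 := by
    intro t a b
    have h := eq_value_zero_of_deriv_zero (fun t a b => (dW t a b).continuousAt)
      (fun t a b => dW t a.le b) a b
    simpa [hp, pullbackFlux, gaussFlux, quadSub] using h
  have hquot : pullback m / y m = pullback 0 / y 0 := by
    refine eq_value_zero_of_deriv_zero (f := fun t => pullback t / y t) (fun t a b => ?_)
      (fun t a b => ?_) h0 h1
    · obtain ⟨g', hg, _⟩ := hasDerivAt_pullback a b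
      exact (hg.div (dy t a b) (ypos t a b).ne').continuousAt
    · obtain ⟨g', hg, hg'⟩ := hasDerivAt_pullback a.le b
      have hw := W0 t a b
      rw [← hg', hp, gaussFlux] at hw
      have ht : t * (1 - t) ≠ 0 := mul_ne_zero a.ne' (sub_pos.2 b).ne'
      have hz : g' * y t - pullback t * gaussDeriv (1 / 2) (1 / 2) t = 0 := by
        refine (mul_eq_zero.1 ?_).resolve_left ht
        linear_combination hw
      have h := hg.div (dy t a.le b) (ypos t a.le b).ne'
      rwa [hz, zero_div] at h
  have hinit : pullback 0 / y 0 = 1 := by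
    simp [hy, pullback, quadSub, gaussHyp_zero]
  rw [hinit] at hquot
  exact (div_eq_one_iff_eq (ypos m h0.le h1).ne').1 hquot

theorem stmt_16 (x : ℝ) (hx : 0 < x) (hx1 : x < 1) :
    Real.sqrt (1 + x) * gaussHyp (1/4) (3/4) 1 (1 - x^2) =
      Real.sqrt 2 * gaussHyp (1/2) (1/2) 1 ((1 - x) / (1 + x)) := by
  have hp : 0 < 1 + x := by positivity
  have h0 : 0 < (1 - x) / (1 + x) := div_pos (by linarith) hp
  have h1 : (1 - x) / (1 + x) < 1 := by rw [div_lt_one hp]; linarith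
  have hone : 1 + (1 - x) / (1 + x) = 2 / (1 + x) := by field_simp; ring
  have hs : quadSub ((1 - x) / (1 + x)) = 1 - x ^ 2 := by
    rw [quadSub, hone]
    field_simp
    ring
  have h := pullback_eq h0 h1
  rw [pullback, hs, hone, Real.sqrt_div (by norm_num)] at h
  rw [← h]
  have h2 : √2 ≠ 0 := by positivity
  have h3 : √(1 + x) ≠ 0 := by positivity
  field_simp
end
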